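/- For every integer w ≥ 4, with u = w−2 and v = w−1, ∑_{a+b=w−1, a≥2, b≥1} ζ(a,b,1) = ζ(v,1) + ζ(u,2). -/

import Mathlib

open Filter

/-- Depth-1 Euler sum `ζ(s; e) = ∑_{n ≥ 1} eⁿ / nˢ`,
defined as the limit of partial sums. `e = 1` gives `ζ(s)`, `e = -1` gives `ζ(s̄)`. -/
noncomputable def eulerSum1 (s : ℕ) (e : ℝ) : ℝ :=
  limUnder atTop (fun N : ℕ =>
    ∑ n ∈ Finset.Icc 1 N, e ^ n / (n : ℝ) ^ s)

/-- Depth-2 Euler sum `ζ(s₁, s₂; e₁, e₂) = ∑_{n₁ > n₂ ≥ 1} e₁^{n₁} e₂^{n₂} / (n₁^{s₁} n₂^{s₂})`,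
defined as the limit of iterated partial sums. A bar over an argument means the
corresponding sign is `-1`. -/
noncomputable def eulerSum2 (s₁ s₂ : ℕ) (e₁ e₂ : ℝ) : ℝ :=
  limUnder atTop (fun N : ℕ =>
    ∑ n₁ ∈ Finset.Icc 1 N, ∑ n₂ ∈ Finset.Ico 1 n₁,
      e₁ ^ n₁ * e₂ ^ n₂ / ((n₁ : ℝ) ^ s₁ * (n₂ : ℝ) ^ s₂))

/-- Depth-3 Euler sum
`ζ(s₁, s₂, s₃; e₁, e₂, e₃) = ∑_{n₁ > n₂ > n₃ ≥ 1} e₁^{n₁} e₂^{n₂} e₃^{n₃} / (n₁^{s₁} n₂^{s₂} n₃^{s₃})`. -/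
noncomputable def eulerSum3 (s₁ s₂ s₃ : ℕ) (e₁ e₂ e₃ : ℝ) : ℝ :=
  limUnder atTop (fun N : ℕ =>
    ∑ n₁ ∈ Finset.Icc 1 N, ∑ n₂ ∈ Finset.Ico 1 n₁, ∑ n₃ ∈ Finset.Ico 1 n₂,
      e₁ ^ n₁ * e₂ ^ n₂ * e₃ ^ n₃ / ((n₁ : ℝ) ^ s₁ * (n₂ : ℝ) ^ s₂ * (n₃ : ℝ) ^ s₃))

/-- Depth-1 multiple T-value `T(s) = 2 ∑_{m odd, m ≥ 1} 1 / mˢ`. -/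
noncomputable def tValue1 (s : ℕ) : ℝ :=
  limUnder atTop (fun N : ℕ =>
    ∑ m ∈ Finset.Icc 1 N, if m % 2 = 1 then 2 / (m : ℝ) ^ s else 0)

/-- Depth-2 multiple T-value
`T(s₁, s₂) = ∑_{m₁ > m₂ > 0, m₁ even, m₂ odd} 4 / (m₁^{s₁} m₂^{s₂})`. -/
noncomputable def tValue2 (s₁ s₂ : ℕ) : ℝ :=
  limUnder atTop (fun N : ℕ =>
    ∑ m₁ ∈ Finset.Icc 1 N, ∑ m₂ ∈ Finset.Ico 1 m₁,
      if m₁ % 2 = 0 ∧ m₂ % 2 = 1 then 4 / ((m₁ : ℝ) ^ s₁ * (m₂ : ℝ) ^ s₂) else 0)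

/-- Depth-3 multiple T-value
`T(s₁, s₂, s₃) = ∑_{m₁ > m₂ > m₃ > 0, m₁ odd, m₂ even, m₃ odd} 8 / (m₁^{s₁} m₂^{s₂} m₃^{s₃})`. -/
noncomputable def tValue3 (s₁ s₂ s₃ : ℕ) : ℝ :=
  limUnder atTop (fun N : ℕ =>
    ∑ m₁ ∈ Finset.Icc 1 N, ∑ m₂ ∈ Finset.Ico 1 m₁, ∑ m₃ ∈ Finset.Ico 1 m₂,
      if m₁ % 2 = 1 ∧ m₂ % 2 = 0 ∧ m₃ % 2 = 1 then
        8 / ((m₁ : ℝ) ^ s₁ * (m₂ : ℝ) ^ s₂ * (m₃ : ℝ) ^ s₃) else 0)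

/-! The Tornheim-type series `∑_{x, y ≥ 1} H_{x-1} / (x ^ (w-3) * y * (x + y))` is evaluated twice.
Repeated use of `1 / (x * y) = (1 / x + 1 / y) / (x + y)` turns it into the left-hand side plus
`R = ∑_{x, y ≥ 1} H_{x-1} / (y * (x + y) ^ (w-2))`. Summing over `y` first instead gives
`∑_n H_{n-1} * H_n / n ^ (w-2)`, and collecting the terms of `ζ(v,1) + ζ(u,2) + R` with `x + y = n`
gives the same series. -/

open Finset Topology

section Series

lemma hasSum_sub_succ_of_antitone {f : ℕ → ℝ} {l : ℝ} (hf : Antitone f)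
    (hl : Tendsto f atTop (𝓝 l)) : HasSum (fun n => f n - f (n + 1)) (f 0 - l) := by
  rw [hasSum_iff_tendsto_nat_of_nonneg fun n => sub_nonneg.2 (hf n.le_succ)]
  simpa only [sum_range_sub'] using hl.const_sub (f 0)

lemma hasSum_sum_antidiagonal {A M : Type*} [AddCommMonoid A] [HasAntidiagonal A]
    [AddCommMonoid M] [TopologicalSpace M] [ContinuousAdd M] [RegularSpace M]
    {f : A × A → M} {a : M} (hf : HasSum f a) :
    HasSum (fun n => ∑ p ∈ antidiagonal n, f p) a :=
  (HasAntidiagonal.sigmaAntidiagonalEquivProd.hasSum_iff.2 hf).sigma fun n =>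
    (antidiagonal n).hasSum f

lemma tendsto_sum_Icc_sum_Ico {M : Type*} [AddCommMonoid M] [TopologicalSpace M] [ContinuousAdd M]
    [RegularSpace M] {f : ℕ → ℕ → M} {a : M}
    (hf : HasSum (fun p : ℕ × ℕ => f (p.1 + p.2 + 2) (p.1 + 1)) a) :
    Tendsto (fun N => ∑ n ∈ Icc 1 N, ∑ m ∈ Ico 1 n, f n m) atTop (𝓝 a) := by
  rw [← tendsto_add_atTop_iff_nat 1]
  refine (hasSum_sum_antidiagonal hf).tendsto_sum_nat.congr fun N => ?_
  have hinner (n : ℕ) : ∑ p ∈ antidiagonal n, f (p.1 + p.2 + 2) (p.1 + 1)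
      = ∑ m ∈ Ico 1 (n + 2), f (n + 2) m := by
    rw [Nat.sum_antidiagonal_eq_sum_range_succ (fun i j => f (i + j + 2) (i + 1)), range_eq_Ico,
      ← sum_Ico_add' (f (n + 2)) 0 (n + 1) 1]
    refine sum_congr rfl fun i hi => ?_
    rw [Nat.add_sub_cancel' (Nat.le_of_lt_succ (mem_Ico.1 hi).2)]
  simp only [hinner]
  rw [range_eq_Ico, sum_Ico_add' (fun n => ∑ m ∈ Ico 1 n, f n m), ← Ico_add_one_right_eq_Icc,
    sum_eq_sum_Ico_succ_bot (by omega : 1 < N + 1 + 1), Ico_self, sum_empty, zero_add, zero_add]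

end Series

section Harmonic

lemma harmonic_le_mul_rpow (n : ℕ) {ε : ℝ} (hε : 0 < ε) :
    (harmonic n : ℝ) ≤ (1 + 1 / ε) * (n : ℝ) ^ ε := by
  rcases n.eq_zero_or_pos with rfl | hn
  · simp [Real.zero_rpow hε.ne']
  have hone : 1 ≤ (n : ℝ) ^ ε := Real.one_le_rpow (by exact_mod_cast hn) hε.le
  calc (harmonic n : ℝ) ≤ 1 + Real.log n := harmonic_le_one_add_log n
    _ ≤ (n : ℝ) ^ ε + (n : ℝ) ^ ε / ε :=
        add_le_add hone (Real.log_le_rpow_div n.cast_nonneg hε)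
    _ = (1 + 1 / ε) * (n : ℝ) ^ ε := by ring

lemma harmonic_nonneg (n : ℕ) : 0 ≤ harmonic n :=
  sum_nonneg fun _ _ => by positivity

lemma harmonic_mono : Monotone harmonic :=
  monotone_nat_of_le_succ fun n => by
    rw [harmonic_succ]
    exact le_add_of_nonneg_right (by positivity)

lemma summable_harmonic_sq_div_rpow {s : ℝ} (hs : 1 < s) :
    Summable fun n : ℕ => (harmonic n : ℝ) ^ 2 / (n : ℝ) ^ s := by
  set ε := (s - 1) / 4 with hε
  have hε_pos : 0 < ε := by linarith
  have hdom : Summable fun n : ℕ => (1 + 1 / ε) ^ 2 * (n : ℝ) ^ (2 * ε - s) :=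
    (Real.summable_nat_rpow.2 (by linarith)).mul_left _
  refine hdom.of_nonneg_of_le (fun n => by positivity) fun n => ?_
  rcases n.eq_zero_or_pos with rfl | hn
  · simp only [harmonic_zero, Rat.cast_zero, zero_pow two_ne_zero, zero_div]
    positivity
  have hn' : (0 : ℝ) < n := by exact_mod_cast hn
  calc (harmonic n : ℝ) ^ 2 / (n : ℝ) ^ s
      ≤ ((1 + 1 / ε) * (n : ℝ) ^ ε) ^ 2 / (n : ℝ) ^ s := by
        gcongr
        · exact_mod_cast harmonic_nonneg n
        · exact harmonic_le_mul_rpow n hε_pos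
    _ = (1 + 1 / ε) ^ 2 * (n : ℝ) ^ (2 * ε - s) := by
        rw [Real.rpow_sub hn', mul_comm 2 ε, Real.rpow_mul hn'.le, Real.rpow_two]
        ring

lemma hasSum_one_div_sub_one_div_add (m : ℕ) :
    HasSum (fun j : ℕ => 1 / ((j : ℝ) + 1) - 1 / ((j : ℝ) + m + 1)) (harmonic m) := by
  induction m with
  | zero => simp
  | succ m ih =>
    have hanti : Antitone fun j : ℕ => 1 / (((j + m : ℕ) : ℝ) + 1) := fun i j hij => by
      dsimp only
      gcongr
    have hlim : Tendsto (fun j : ℕ => 1 / (((j + m : ℕ) : ℝ) + 1)) atTop (𝓝 0) :=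
      (tendsto_add_atTop_iff_nat m).2 tendsto_one_div_add_atTop_nhds_zero_nat
    convert ih.add (hasSum_sub_succ_of_antitone hanti hlim) using 2 with j
    · push_cast
      ring
    · simp

lemma sum_antidiagonal_one_div_fst (n : ℕ) :
    ∑ p ∈ antidiagonal n, 1 / ((p.1 : ℚ) + 1) = harmonic (n + 1) := by
  rw [Nat.sum_antidiagonal_eq_sum_range_succ (fun i _ => 1 / ((i : ℚ) + 1))]
  simp [harmonic]

lemma sum_antidiagonal_one_div_mul (n : ℕ) :
    ∑ p ∈ antidiagonal n, 1 / (((p.1 : ℚ) + 1) * (p.2 + 1)) = 2 * harmonic (n + 1) / (n + 2) := by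
  have hsnd : ∑ p ∈ antidiagonal n, 1 / ((p.2 : ℚ) + 1) = harmonic (n + 1) :=
    (Nat.sum_antidiagonal_swap (f := fun p => 1 / ((p.1 : ℚ) + 1))).trans
      (sum_antidiagonal_one_div_fst n)
  rw [two_mul]
  nth_rw 1 [← sum_antidiagonal_one_div_fst]
  rw [← hsnd, ← sum_add_distrib, sum_div]
  refine sum_congr rfl fun p hp => ?_
  have hn : (n : ℚ) = p.1 + p.2 := by exact_mod_cast (mem_antidiagonal.1 hp).symm
  rw [hn]
  field_simp
  ring

lemma sum_antidiagonal_harmonic_div (n : ℕ) :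
    ∑ p ∈ antidiagonal n, harmonic p.1 / ((p.2 : ℚ) + 1)
      = harmonic (n + 1) ^ 2 - ∑ i ∈ range (n + 1), 1 / ((i : ℚ) + 1) ^ 2 := by
  induction n with
  | zero => simp
  | succ n ih =>
    have hstep : ∑ p ∈ antidiagonal (n + 1), harmonic p.1 / ((p.2 : ℚ) + 1)
        = ∑ p ∈ antidiagonal n, harmonic p.1 / ((p.2 : ℚ) + 1)
          + ∑ p ∈ antidiagonal n, 1 / (((p.1 : ℚ) + 1) * (p.2 + 1)) := by
      rw [Nat.sum_antidiagonal_succ, harmonic_zero, zero_div, zero_add, ← sum_add_distrib]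
      refine sum_congr rfl fun p _ => ?_
      rw [harmonic_succ]
      push_cast
      field_simp
    rw [hstep, ih, sum_antidiagonal_one_div_mul, sum_range_succ _ (n + 1), harmonic_succ (n + 1)]
    push_cast
    field_simp
    ring

lemma sum_antidiagonal_eq_harmonic_mul_harmonic (n : ℕ) :
    ∑ p ∈ antidiagonal n, (1 / ((p.1 : ℚ) + 1) / (n + 2) + 1 / ((p.1 : ℚ) + 1) ^ 2
        + harmonic p.1 / ((p.2 : ℚ) + 1))
      = harmonic (n + 1) * harmonic (n + 2) := by
  rw [sum_add_distrib, sum_add_distrib, ← sum_div, sum_antidiagonal_one_div_fst,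
    sum_antidiagonal_harmonic_div,
    Nat.sum_antidiagonal_eq_sum_range_succ (fun i _ => 1 / ((i : ℚ) + 1) ^ 2),
    harmonic_succ (n + 1)]
  push_cast
  ring

end Harmonic

section Tornheim

lemma mul_mul_add_le_two_mul_pow {x y : ℝ} (hx : 1 ≤ x) (hy : 1 ≤ y) {r s t : ℕ}
    (hrt : 2 ≤ r + t) (hst : 2 ≤ s + t) (hrst : 3 ≤ r + s + t) :
    x * y * (x + y) ≤ 2 * (x ^ r * y ^ s * (x + y) ^ t) := by
  have hxy : 1 ≤ x + y := by linarith
  have hxy_pos : 0 < x * y := by positivity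
  have mono {r' s' t' : ℕ} (hr : r' ≤ r) (hs : s' ≤ s) (ht : t' ≤ t) :
      x ^ r' * y ^ s' * (x + y) ^ t' ≤ x ^ r * y ^ s * (x + y) ^ t := by gcongr
  obtain rfl | rfl | ht : t = 0 ∨ t = 1 ∨ 2 ≤ t := by omega
  · have h := mono (r' := 2) (s' := 2) (by omega) (by omega) le_rfl
    nlinarith [mul_nonneg (sub_nonneg.2 hx) (sub_nonneg.2 hy)]
  · have h := mono (r' := 1) (s' := 1) (by omega) (by omega) le_rfl
    nlinarith
  · have hxxx : 0 ≤ x ^ 3 := by positivity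
    have hyyy : 0 ≤ y ^ 3 := by positivity
    have hxxy : 0 ≤ x ^ 2 * y := by positivity
    have hxyy : 0 ≤ x * y ^ 2 := by positivity
    obtain hr | hs | ht : 1 ≤ r ∨ 1 ≤ s ∨ 3 ≤ t := by omega
    · linarith [mono (s' := 0) hr (by omega) ht]
    · linarith [mono (r' := 0) (by omega) hs ht]
    · linarith [mono (r' := 0) (s' := 0) (by omega) (by omega) ht]

/-- The summand of the weighted Tornheim series
`∑_{x, y ≥ 1} c_{x-1} / (x ^ r * y ^ s * (x + y) ^ t)` at `x = p.1 + 1` and `y = p.2 + 1`.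
With `s = 0`, `n₁ = x + y` and `n₂ = x` it is the summand of `ζ(t, r)` for `c = 1`, and that of
`ζ(t, r, 1)` summed over `n₃` for `c = harmonic`. -/
noncomputable def tornheimTerm (c : ℕ → ℝ) (r s t : ℕ) (p : ℕ × ℕ) : ℝ :=
  c p.1 / (((p.1 : ℝ) + 1) ^ r * ((p.2 : ℝ) + 1) ^ s * ((p.1 : ℝ) + p.2 + 2) ^ t)

lemma tornheimTerm_succ_succ (c : ℕ → ℝ) (r s t : ℕ) (p : ℕ × ℕ) :
    tornheimTerm c (r + 1) (s + 1) t p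
      = tornheimTerm c (r + 1) s (t + 1) p + tornheimTerm c r (s + 1) (t + 1) p := by
  simp only [tornheimTerm]
  field_simp
  ring

lemma tornheimTerm_one_eq_sum_add (c : ℕ → ℝ) (k t : ℕ) (p : ℕ × ℕ) :
    tornheimTerm c k 1 t p
      = ∑ a ∈ Ico (t + 1) (k + t + 1), tornheimTerm c (k + t + 1 - a) 0 a p
        + tornheimTerm c 0 1 (k + t) p := by
  induction k generalizing t with
  | zero => simp
  | succ k ih =>
    rw [tornheimTerm_succ_succ, zero_add, ih,
      sum_eq_sum_Ico_succ_bot (by omega : t + 1 < k + 1 + t + 1),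
      show k + (t + 1) = k + 1 + t by omega, show k + 1 + t + 1 - (t + 1) = k + 1 by omega]
    ring

lemma hasSum_tornheimTerm_snd (c : ℕ → ℝ) (k m : ℕ) :
    HasSum (fun j => tornheimTerm c k 1 1 (m, j))
      (c m * harmonic (m + 1) / ((m : ℝ) + 1) ^ (k + 1)) := by
  have hsum := (hasSum_one_div_sub_one_div_add (m + 1)).mul_left (c m / ((m : ℝ) + 1) ^ (k + 1))
  rw [div_mul_eq_mul_div] at hsum
  refine hsum.congr_fun fun j => ?_
  simp only [tornheimTerm]
  push_cast
  rw [show (j : ℝ) + (m + 1) + 1 = m + j + 2 by ring]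
  field_simp
  ring

lemma summable_tornheimTerm_harmonic_succ :
    Summable (tornheimTerm (fun m => harmonic (m + 1)) 1 1 1) := by
  have hnonneg : 0 ≤ tornheimTerm (fun m => harmonic (m + 1)) 1 1 1 := fun p =>
    div_nonneg (Rat.cast_nonneg.2 (harmonic_nonneg _)) (by positivity)
  refine (summable_prod_of_nonneg hnonneg).2
    ⟨fun m => (hasSum_tornheimTerm_snd _ 1 m).summable, ?_⟩
  have hsq := (summable_nat_add_iff 1).2 (summable_harmonic_sq_div_rpow one_lt_two)
  refine hsq.congr fun m => ?_
  rw [(hasSum_tornheimTerm_snd _ 1 m).tsum_eq]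
  push_cast
  rw [Real.rpow_two, sq (harmonic (m + 1) : ℝ)]

lemma summable_tornheimTerm {c : ℕ → ℝ} (hc : ∀ m, |c m| ≤ harmonic (m + 1)) {r s t : ℕ}
    (hrt : 2 ≤ r + t) (hst : 2 ≤ s + t) (hrst : 3 ≤ r + s + t) :
    Summable (tornheimTerm c r s t) := by
  refine (summable_tornheimTerm_harmonic_succ.mul_left 2).of_norm_bounded fun ⟨m, j⟩ => ?_
  have hH : (0 : ℝ) ≤ harmonic (m + 1) := by exact_mod_cast harmonic_nonneg (m + 1)
  have hbound := mul_mul_add_le_two_mul_pow (x := m + 1) (y := j + 1) (by simp) (by simp)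
    hrt hst hrst
  rw [show (m : ℝ) + 1 + (j + 1) = m + j + 2 by ring] at hbound
  simp only [tornheimTerm, pow_one]
  rw [Real.norm_eq_abs, abs_div, abs_of_pos (a := _ * _ * _) (by positivity), ← mul_div_assoc,
    div_le_div_iff₀ (by positivity) (by positivity), mul_comm 2 (harmonic (m + 1) : ℝ),
    mul_assoc (harmonic (m + 1) : ℝ) 2]
  exact mul_le_mul (hc m) hbound (by positivity) hH

lemma abs_one_le_harmonic_succ (m : ℕ) : |(1 : ℕ → ℝ) m| ≤ harmonic (m + 1) := by
  rw [Pi.one_apply, abs_one]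
  exact_mod_cast (by simp : (1 : ℚ) = harmonic 1).trans_le (harmonic_mono (Nat.le_add_left 1 m))

lemma abs_harmonic_le_harmonic_succ (m : ℕ) : |(harmonic m : ℝ)| ≤ harmonic (m + 1) := by
  rw [abs_of_nonneg (by exact_mod_cast harmonic_nonneg m)]
  exact_mod_cast harmonic_mono m.le_succ

lemma tsum_tornheimTerm_harmonic {k : ℕ} (hk : 1 ≤ k) :
    ∑' p, tornheimTerm (harmonic ·) k 1 1 p
      = ∑' n : ℕ, (harmonic n : ℝ) * harmonic (n + 1) / ((n : ℝ) + 1) ^ (k + 1) := by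
  have hs : Summable (tornheimTerm (harmonic ·) k 1 1) :=
    summable_tornheimTerm abs_harmonic_le_harmonic_succ (by omega) (by omega) (by omega)
  exact (hs.hasSum.prod_fiberwise (hasSum_tornheimTerm_snd _ k)).tsum_eq.symm

lemma tsum_tornheimTerm_eq_sum_tsum_add {k : ℕ} (hk : 1 ≤ k) {c : ℕ → ℝ}
    (hc : ∀ m, |c m| ≤ harmonic (m + 1)) :
    ∑' p, tornheimTerm c k 1 1 p
      = ∑ a ∈ Icc 2 (k + 1), ∑' p, tornheimTerm c (k + 2 - a) 0 a p
        + ∑' p, tornheimTerm c 0 1 (k + 1) p := by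
  have hs {r s t : ℕ} (hrt : 2 ≤ r + t) (hst : 2 ≤ s + t) (hrst : 3 ≤ r + s + t) :
      Summable (tornheimTerm c r s t) := summable_tornheimTerm hc hrt hst hrst
  have hterm (a : ℕ) (ha : a ∈ Icc 2 (k + 1)) : Summable (tornheimTerm c (k + 2 - a) 0 a) := by
    have := mem_Icc.1 ha
    exact hs (by omega) (by omega) (by omega)
  rw [← Summable.tsum_finsetSum hterm,
    ← (summable_sum hterm).tsum_add (hs (by omega) (by omega) (by omega))]
  exact tsum_congr fun p => tornheimTerm_one_eq_sum_add c k 1 p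

lemma sum_antidiagonal_tornheimTerm (k n : ℕ) :
    ∑ p ∈ antidiagonal n, (tornheimTerm 1 1 0 (k + 2) p + tornheimTerm 1 2 0 (k + 1) p
        + tornheimTerm (harmonic ·) 0 1 (k + 1) p)
      = (harmonic (n + 1) : ℝ) * harmonic (n + 2) / (((n + 1 : ℕ) : ℝ) + 1) ^ (k + 1) := by
  have hsum : ∑ p ∈ antidiagonal n, (1 / ((p.1 : ℝ) + 1) / (n + 2) + 1 / ((p.1 : ℝ) + 1) ^ 2
      + (harmonic p.1 : ℝ) / ((p.2 : ℝ) + 1)) = (harmonic (n + 1) : ℝ) * harmonic (n + 2) := by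
    have hrat := congrArg (Rat.cast : ℚ → ℝ) (sum_antidiagonal_eq_harmonic_mul_harmonic n)
    push_cast at hrat
    exact hrat
  rw [← hsum, sum_div]
  refine sum_congr rfl fun p hp => ?_
  have hn : (p.1 : ℝ) + p.2 = n := by exact_mod_cast mem_antidiagonal.1 hp
  have hn' : ((n + 1 : ℕ) : ℝ) + 1 = n + 2 := by
    push_cast
    ring
  simp only [tornheimTerm, hn, hn', Pi.one_apply]
  field_simp
  ring

lemma tsum_tornheimTerm_add_tsum_tornheimTerm_add {k : ℕ} (hk : 1 ≤ k) :
    ∑' p, tornheimTerm 1 1 0 (k + 2) p + ∑' p, tornheimTerm 1 2 0 (k + 1) p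
        + ∑' p, tornheimTerm (harmonic ·) 0 1 (k + 1) p
      = ∑' n : ℕ, (harmonic n : ℝ) * harmonic (n + 1) / ((n : ℝ) + 1) ^ (k + 1) := by
  have hs₁ : Summable (tornheimTerm 1 1 0 (k + 2)) :=
    summable_tornheimTerm abs_one_le_harmonic_succ (by omega) (by omega) (by omega)
  have hs₂ : Summable (tornheimTerm 1 2 0 (k + 1)) :=
    summable_tornheimTerm abs_one_le_harmonic_succ (by omega) (by omega) (by omega)
  have hs₃ : Summable (tornheimTerm (harmonic ·) 0 1 (k + 1)) :=
    summable_tornheimTerm abs_harmonic_le_harmonic_succ (by omega) (by omega) (by omega)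
  have hdiag := hasSum_sum_antidiagonal ((hs₁.add hs₂).add hs₃).hasSum
  simp only [sum_antidiagonal_tornheimTerm] at hdiag
  rw [← hs₁.tsum_add hs₂, ← (hs₁.add hs₂).tsum_add hs₃, eq_comm]
  refine HasSum.tsum_eq ((hasSum_nat_add_iff' 1).1 ?_)
  rwa [sum_range_one, harmonic_zero, Rat.cast_zero, zero_mul, zero_div, sub_zero]

end Tornheim

section EulerSum

lemma eulerSum2_one_one {s t : ℕ} (hs : 2 ≤ s) (ht : 1 ≤ t) :
    eulerSum2 s t 1 1 = ∑' p, tornheimTerm 1 t 0 s p := by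
  have hsum : Summable (tornheimTerm 1 t 0 s) :=
    summable_tornheimTerm abs_one_le_harmonic_succ (by omega) (by omega) (by omega)
  refine (tendsto_sum_Icc_sum_Ico (hsum.hasSum.congr_fun fun p => ?_)).limUnder_eq
  simp only [tornheimTerm, Pi.one_apply]
  push_cast
  ring

lemma eulerSum3_one_one_one_one {s t : ℕ} (hs : 2 ≤ s) (ht : 1 ≤ t) :
    eulerSum3 s t 1 1 1 1 = ∑' p, tornheimTerm (harmonic ·) t 0 s p := by
  have hsum : Summable (tornheimTerm (harmonic ·) t 0 s) :=
    summable_tornheimTerm abs_harmonic_le_harmonic_succ (by omega) (by omega) (by omega)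
  refine (tendsto_sum_Icc_sum_Ico (hsum.hasSum.congr_fun fun p => ?_)).limUnder_eq
  have hH : (harmonic p.1 : ℝ) = ∑ i ∈ Ico 1 (p.1 + 1), 1 / (i : ℝ) := by
    rw [Ico_add_one_right_eq_Icc, harmonic_eq_sum_Icc]
    push_cast
    simp only [one_div]
  rw [tornheimTerm, hH, sum_div]
  refine sum_congr rfl fun i _ => ?_
  push_cast
  ring

end EulerSum

/-- For `w ≥ 4`, with `u = w − 2`, `v = w − 1`:
`∑_{a+b=w−1, a≥2} ζ(a,b,1) = ζ(v,1) + ζ(u,2)`. -/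
theorem sum_zeta_ab1 (w : ℕ) (hw : 4 ≤ w) :
    ∑ a ∈ Finset.Icc 2 (w - 2), eulerSum3 a (w - 1 - a) 1 1 1 1
      = eulerSum2 (w - 1) 1 1 1 + eulerSum2 (w - 2) 2 1 1 := by
  obtain ⟨k, rfl⟩ : ∃ k, w = k + 3 := ⟨w - 3, by omega⟩
  have hk : 1 ≤ k := by omega
  have hleft (a : ℕ) (ha : a ∈ Icc 2 (k + 1)) :
      eulerSum3 a (k + 2 - a) 1 1 1 1 = ∑' p, tornheimTerm (harmonic ·) (k + 2 - a) 0 a p := by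
    have := mem_Icc.1 ha
    exact eulerSum3_one_one_one_one (by omega) (by omega)
  rw [show k + 3 - 2 = k + 1 by omega, show k + 3 - 1 = k + 2 by omega, sum_congr rfl hleft,
    eulerSum2_one_one (by omega) le_rfl, eulerSum2_one_one (by omega) one_le_two]
  apply add_right_cancel (b := ∑' p, tornheimTerm (harmonic ·) 0 1 (k + 1) p)
  rw [← tsum_tornheimTerm_eq_sum_tsum_add hk abs_harmonic_le_harmonic_succ,
    tsum_tornheimTerm_harmonic hk, tsum_tornheimTerm_add_tsum_tornheimTerm_add hk]
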